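/- Let n ≥ 1 and let x ∈ ℝⁿ be such that the n+1 real numbers x₁, x₂, …, xₙ, 0 are pairwise distinct. Then there is exactly one maximal chain ∅ ⊊ S₁ ⊊ ⋯ ⊊ Sₙ ⊊ [n+1] of nonempty proper subsets of [n+1] such that x lies in the cone of nonnegative real combinations of u_{S₁},…,u_{Sₙ}. -/

import Mathlib

/-- The standard basis vector `e_s` of `ℤⁿ` for `s ∈ [n+1]`, with the convention
that the vector corresponding to the last element `n+1` is zero. -/
def permEps (n : ℕ) (s : Fin (n + 1)) : Fin n → ℤ :=
  fun i => if (i : ℕ) = (s : ℕ) then 1 else 0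

/-- The ray generator `u_S` of the permutohedral fan, for `∅ ⊊ S ⊊ [n+1]`. -/
def permU (n : ℕ) (S : Finset (Fin (n + 1))) : Fin n → ℤ :=
  if Fin.last n ∈ S then -∑ s ∈ Sᶜ, permEps n s else ∑ s ∈ S, permEps n s

/-- The extension `x̃` of `x ∈ ℝⁿ` to `[n+1]` coordinates: `x̃ₛ = xₛ` for
`1 ≤ s ≤ n` and `x̃_{n+1} = 0`. -/
def tild (n : ℕ) (x : Fin n → ℝ) (s : Fin (n + 1)) : ℝ :=
  if h : (s : ℕ) < n then x ⟨(s : ℕ), h⟩ else 0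

lemma permU_apply (n : ℕ) (S : Finset (Fin (n + 1))) (i : Fin n) :
    (permU n S i : ℝ) = (if i.castSucc ∈ S then 1 else 0) - (if Fin.last n ∈ S then 1 else 0) := by
  have key : ∀ T : Finset (Fin (n + 1)),
      (∑ s ∈ T, permEps n s) i = if i.castSucc ∈ T then 1 else 0 := by
    intro T
    rw [Finset.sum_apply]
    have : ∀ s, permEps n s i = if i.castSucc = s then 1 else 0 := by
      intro s
      simp [permEps, Fin.ext_iff]
    simp [this]
  unfold permU
  by_cases h : Fin.last n ∈ S
  · simp only [h, if_true, Pi.neg_apply, key]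
    by_cases h2 : i.castSucc ∈ S <;> simp [h2]
  · simp only [h, if_false, key]
    by_cases h2 : i.castSucc ∈ S <;> simp [h2]

lemma tild_castSucc (n : ℕ) (x : Fin n → ℝ) (i : Fin n) : tild n x i.castSucc = x i := by
  simp [tild]

lemma tild_last (n : ℕ) (x : Fin n → ℝ) : tild n x (Fin.last n) = 0 := by
  simp [tild]

lemma tele (n : ℕ) (z : Fin (n + 1) → ℝ) (k : Fin (n + 1)) :
    ∑ p : Fin n, (z p.castSucc - z p.succ) * (if k ≤ p.castSucc then 1 else 0)
      = z k - z (Fin.last n) := by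
  induction n with
  | zero =>
    have : k = Fin.last 0 := by
      ext
      simp
    rw [this]
    simp
  | succ n ih =>
    rw [Fin.sum_univ_castSucc]
    refine Fin.lastCases ?_ (fun k => ?_) k
    · simp [Fin.le_def]
      apply Finset.sum_eq_zero
      intro p _
      rw [if_neg]
      omega
    · have := ih (fun j => z j.castSucc) k
      simp only [Fin.castSucc_le_castSucc_iff, ← Fin.succ_castSucc] at this ⊢
      rw [this]
      simp [Fin.le_last]

lemma chain_card (n : ℕ) (S : Fin n → Finset (Fin (n + 1)))
    (h1 : ∀ p, (S p).Nonempty) (h2 : ∀ p, S p ≠ Finset.univ)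
    (h3 : ∀ p q, p < q → S p ⊂ S q) (p : Fin n) : (S p).card = p + 1 := by
  have c1 : ∀ p, 0 < (S p).card := fun p => (h1 p).card_pos
  have c2 : ∀ p, (S p).card < n + 1 := fun p => by
    have := (Finset.card_lt_iff_ne_univ (S p)).2 (h2 p)
    simpa using this
  let f : Fin n → Fin n := fun p => ⟨(S p).card - 1, by have := c1 p; have := c2 p; omega⟩
  have hf : StrictMono f := by
    intro p q hpq
    have := Finset.card_lt_card (h3 p q hpq)
    have := c1 p
    simp only [f, Fin.lt_def]
    omega
  have : f = id := by
    apply (StrictMono.range_inj hf strictMono_id).1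
    rw [(Finite.surjective_of_injective hf.injective).range_eq]
    simp
  have h5 : (S p).card - 1 = p := congrArg Fin.val (congrFun this p)
  have := c1 p
  omega

lemma chain_upper (n : ℕ) (x : Fin n → ℝ)
    (hx : ∀ i j : Fin (n + 1), i ≠ j → tild n x i ≠ tild n x j)
    (S : Fin n → Finset (Fin (n + 1)))
    (h3 : ∀ p q, p < q → S p ⊂ S q)
    (a : Fin n → ℝ) (ha : ∀ p, 0 ≤ a p)
    (hxa : ∀ i, x i = ∑ p, a p * (permU n (S p) i : ℝ)) (p : Fin n)
    (s t : Fin (n + 1)) (hs : s ∈ S p) (ht : t ∉ S p) : tild n x t < tild n x s := by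
  have key : ∀ s, tild n x s =
      ∑ p, a p * ((if s ∈ S p then 1 else 0) - (if Fin.last n ∈ S p then 1 else 0)) := by
    intro s
    refine Fin.lastCases ?_ (fun i => ?_) s
    · simp [tild_last]
    · rw [tild_castSucc, hxa]
      simp only [permU_apply]
  refine lt_of_le_of_ne ?_ (hx t s (by rintro rfl; exact ht hs))
  rw [key, key]
  refine Finset.sum_le_sum fun q _ => mul_le_mul_of_nonneg_left ?_ (ha q)
  refine sub_le_sub_right ?_ _
  by_cases htq : t ∈ S q
  · have : s ∈ S q := by
      rcases lt_trichotomy p q with h | h | h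
      · exact (h3 p q h).1 hs
      · exact h ▸ hs
      · exact absurd ((h3 q p h).1 htq) ht
    simp [htq, this]
  · rw [if_neg htq]
    split_ifs <;> norm_num

lemma chain_unique (n : ℕ) (y : Fin (n + 1) → ℝ) (S T : Finset (Fin (n + 1)))
    (hc : S.card = T.card)
    (hS : ∀ s t, s ∈ S → t ∉ S → y t < y s) (hT : ∀ s t, s ∈ T → t ∉ T → y t < y s) :
    S = T := by
  by_contra hne
  have h1 : ¬ S ⊆ T := fun h => hne (Finset.eq_of_subset_of_card_le h hc.ge)
  have h2 : ¬ T ⊆ S := fun h => hne (Finset.eq_of_subset_of_card_le h hc.le).symm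
  obtain ⟨s, hs, hs'⟩ := Finset.not_subset.1 h1
  obtain ⟨t, ht, ht'⟩ := Finset.not_subset.1 h2
  exact lt_asymm (hS s t hs ht') (hT t s ht hs')

/-- If the `n+1` numbers `x₁, …, xₙ, 0` are pairwise distinct, then there is exactly
one maximal chain `∅ ⊊ S₁ ⊊ ⋯ ⊊ Sₙ ⊊ [n+1]` of nonempty proper subsets of `[n+1]`
such that `x` lies in the cone of nonnegative combinations of `u_{S₁},…,u_{Sₙ}`. -/
theorem existsUnique_chain_of_pairwise_distinct (n : ℕ) (hn : 1 ≤ n) (x : Fin n → ℝ)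
    (hx : ∀ i j : Fin (n + 1), i ≠ j → tild n x i ≠ tild n x j) :
    ∃! S : Fin n → Finset (Fin (n + 1)),
      ((∀ p, (S p).Nonempty) ∧ (∀ p, S p ≠ Finset.univ) ∧
        (∀ p q, p < q → S p ⊂ S q)) ∧
      ∃ a : Fin n → ℝ, (∀ p, 0 ≤ a p) ∧
        ∀ i, x i = ∑ p, a p * (permU n (S p) i : ℝ) := by
  let σ : Equiv.Perm (Fin (n + 1)) := Tuple.sort (fun s => - tild n x s)
  have hσ : Monotone ((fun s => - tild n x s) ∘ σ) := Tuple.monotone_sort _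
  let S : Fin n → Finset (Fin (n + 1)) :=
    fun p => Finset.univ.filter (fun s => σ.symm s ≤ p.castSucc)
  have mem : ∀ p s, s ∈ S p ↔ σ.symm s ≤ p.castSucc := by
    intro p s
    simp [S]
  have g1 : ∀ p, (S p).Nonempty := fun p => ⟨σ 0, by rw [mem]; simp⟩
  have g2 : ∀ p, S p ≠ Finset.univ := by
    intro p h
    have : σ (Fin.last n) ∈ S p := by rw [h]; exact Finset.mem_univ _
    rw [mem, Equiv.symm_apply_apply] at this
    exact absurd (Fin.castSucc_lt_last p) (not_lt.2 this)
  have g3 : ∀ p q, p < q → S p ⊂ S q := by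
    intro p q hpq
    rw [Finset.ssubset_iff_of_subset]
    · refine ⟨σ q.castSucc, ?_, ?_⟩
      · rw [mem]; simp
      · rw [mem]; simpa using hpq
    · intro s hs
      rw [mem] at hs ⊢
      exact hs.trans (by simpa using hpq.le)
  let a : Fin n → ℝ := fun p => tild n x (σ p.castSucc) - tild n x (σ p.succ)
  have ga : ∀ p, 0 ≤ a p := by
    intro p
    have := hσ (Fin.castSucc_lt_succ (i := p)).le
    simp only [Function.comp] at this
    simp only [a]
    linarith
  have gx : ∀ i, x i = ∑ p, a p * (permU n (S p) i : ℝ) := by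
    intro i
    simp only [permU_apply, mul_sub, Finset.sum_sub_distrib, mem, a]
    have e1 := tele n (fun k => tild n x (σ k)) (σ.symm i.castSucc)
    have e2 := tele n (fun k => tild n x (σ k)) (σ.symm (Fin.last n))
    simp only [Equiv.apply_symm_apply, tild_castSucc, tild_last] at e1 e2
    simp only [sub_mul] at e1 e2 ⊢
    rw [e1, e2]
    ring
  refine ⟨S, ⟨⟨g1, g2, g3⟩, a, ga, gx⟩, ?_⟩
  rintro T ⟨⟨t1, t2, t3⟩, b, hb, hxb⟩
  funext p
  refine chain_unique n (tild n x) _ _ ?_ (chain_upper n x hx T t3 b hb hxb p)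
    (chain_upper n x hx S g3 a ga gx p)
  rw [chain_card n T t1 t2 t3, chain_card n S g1 g2 g3]
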